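/- arXiv:2301.01530 — 3 statements merged into one kernel-verified Lean document; each statement's English description precedes it below -/
import Mathlib

section
/- Let 0 < μ < L < ∞, let f : ℝ^n → ℝ be L-smooth and μ-strongly convex with minimizer x_⋆ and minimal value f_⋆ = f(x_⋆), and let ε ∈ [0,1). Let x_k ∈ ℝ^n and let d_k ∈ ℝ^n satisfy the relative error criterion ‖d_k − ∇f(x_k)‖ ≤ ε‖∇f(x_k)‖. Let γ_k ∈ ℝ minimize γ ↦ f(x_k − γ d_k) over ℝ, and set x_{k+1} = x_k − γ_k d_k. Then f(x_{k+1}) − f_⋆ ≤ ((1 − q_ε)/(1 + q_ε))² (f(x_k) − f_⋆), where q_ε = μ(1 − ε)/(L(1 + ε)). -/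
open scoped InnerProductSpace

section helpers

variable {E : Type*} [NormedAddCommGroup E] [InnerProductSpace ℝ E] [CompleteSpace E]

theorem asd_hasDerivAt_line (f : E → ℝ) (hdiff : Differentiable ℝ f) (x v : E) (t : ℝ) :
    HasDerivAt (fun s : ℝ => f (x + s • v)) ⟪gradient f (x + t • v), v⟫_ℝ t := by
  have h1 : HasFDerivAt f (InnerProductSpace.toDual ℝ E (gradient f (x + t • v))) (x + t • v) :=
    (hdiff (x + t • v)).hasGradientAt
  have h2 : HasDerivAt (fun s : ℝ => x + s • v) v t := by
    simpa using ((hasDerivAt_id t).smul_const v).const_add x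
  have h3 := h1.comp_hasDerivAt t h2
  rw [InnerProductSpace.toDual_apply_apply] at h3
  exact h3

theorem asd_descent (f : E → ℝ) (hdiff : Differentiable ℝ f) (L : ℝ)
    (hsmooth : ∀ a b, ‖gradient f a - gradient f b‖ ≤ L * ‖a - b‖) (x v : E) :
    f (x + v) ≤ f x + ⟪gradient f x, v⟫_ℝ + L / 2 * ‖v‖ ^ 2 := by
  have hd : ∀ t : ℝ, HasDerivAt
      (fun s : ℝ => f (x + s • v) - s * ⟪gradient f x, v⟫_ℝ - L / 2 * ‖v‖ ^ 2 * s ^ 2)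
      (⟪gradient f (x + t • v), v⟫_ℝ - ⟪gradient f x, v⟫_ℝ - L * ‖v‖ ^ 2 * t) t := by
    intro t
    have h := ((asd_hasDerivAt_line f hdiff x v t).sub
      ((hasDerivAt_id t).mul_const ⟪gradient f x, v⟫_ℝ)).sub
      (((hasDerivAt_id t).pow 2).const_mul (L / 2 * ‖v‖ ^ 2))
    have e : ⟪gradient f (x + t • v), v⟫_ℝ - ⟪gradient f x, v⟫_ℝ - L * ‖v‖ ^ 2 * t =
        ⟪gradient f (x + t • v), v⟫_ℝ - 1 * ⟪gradient f x, v⟫_ℝ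
          - L / 2 * ‖v‖ ^ 2 * (((2 : ℕ) : ℝ) * id t ^ (2 - 1) * 1) := by
      simp only [id, Nat.cast_ofNat, Nat.add_one_sub_one, pow_one]
      ring
    rw [e]
    exact h
  obtain ⟨c, hc, hc'⟩ := exists_hasDerivAt_eq_slope _ _ (zero_lt_one (α := ℝ))
    (fun t _ => (hd t).continuousAt.continuousWithinAt) (fun t _ => hd t)
  have hle : ⟪gradient f (x + c • v), v⟫_ℝ - ⟪gradient f x, v⟫_ℝ ≤ L * ‖v‖ ^ 2 * c := by
    rw [← inner_sub_left]
    refine (real_inner_le_norm _ _).trans ?_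
    have := hsmooth (x + c • v) x
    rw [add_sub_cancel_left, norm_smul, Real.norm_of_nonneg hc.1.le] at this
    nlinarith [norm_nonneg v]
  simp only [one_smul, zero_smul, add_zero, one_mul, zero_mul, one_pow, mul_one, sub_zero, div_one, ne_eq, OfNat.ofNat_ne_zero,
    not_false_eq_true, zero_pow, mul_zero] at hc'
  linarith

theorem asd_interp (f : E → ℝ) (hdiff : Differentiable ℝ f) (μ L : ℝ) (hμL : μ < L)
    (hsmooth : ∀ a b, ‖gradient f a - gradient f b‖ ≤ L * ‖a - b‖)
    (hsc : ∀ a b, f a ≥ f b + ⟪gradient f b, a - b⟫_ℝ + μ / 2 * ‖a - b‖ ^ 2) (a b : E) :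
    f b + ⟪gradient f b, a - b⟫_ℝ + 1 / (2 * (L - μ)) *
      (⟪gradient f a - gradient f b, gradient f a - gradient f b⟫_ℝ
        - 2 * μ * ⟪gradient f a - gradient f b, a - b⟫_ℝ + μ * L * ⟪a - b, a - b⟫_ℝ) ≤ f a := by
  have hD : 0 < L - μ := sub_pos.2 hμL
  generalize hw : (-(1 / (L - μ))) • ((gradient f a - gradient f b) - μ • (a - b)) = w
  have h1 := asd_descent f hdiff L hsmooth a w
  have h2 := hsc (a + w) b
  have e : a + w - b = (a - b) + w := by abel
  rw [e] at h2
  generalize hga : gradient f a = ga at *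
  generalize hgb : gradient f b = gb at *
  generalize a - b = s at *
  have hga' : ga = (ga - gb) + gb := by abel
  rw [hga'] at h1
  generalize ga - gb = y at *
  rw [← real_inner_self_eq_norm_sq] at h1 h2
  subst hw
  simp only [inner_add_left, inner_add_right, inner_smul_left, inner_smul_right, inner_sub_left,
    inner_sub_right, real_inner_comm, conj_trivial] at h1 h2 ⊢
  have key := h2.le.trans h1
  have hD' := hD.ne'
  refine le_of_sub_nonneg ((sub_nonneg.2 key).trans_eq ?_)
  field_simp
  ring

end helpers

theorem asd_algebra (μ L ε ρ : ℝ) (hμ : 0 < μ) (hμL : μ < L) (hε0 : 0 ≤ ε) (hε1 : ε < 1)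
    (hρ : ρ = (L * (1 + ε) - μ * (1 - ε)) / (L * (1 + ε) + μ * (1 - ε)))
    {E : Type*} [NormedAddCommGroup E] [InnerProductSpace ℝ E] (u0 u1 g0 g1 : E) (f0 f1 fs : ℝ)
    (h01 : f1 + ⟪g1, u0 - u1⟫_ℝ + 1 / (2 * (L - μ)) *
      (⟪g0 - g1, g0 - g1⟫_ℝ - 2 * μ * ⟪g0 - g1, u0 - u1⟫_ℝ + μ * L * ⟪u0 - u1, u0 - u1⟫_ℝ) ≤ f0)
    (hs0 : f0 - ⟪g0, u0⟫_ℝ + 1 / (2 * (L - μ)) *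
      (⟪g0, g0⟫_ℝ - 2 * μ * ⟪g0, u0⟫_ℝ + μ * L * ⟪u0, u0⟫_ℝ) ≤ fs)
    (hs1 : f1 - ⟪g1, u1⟫_ℝ + 1 / (2 * (L - μ)) *
      (⟪g1, g1⟫_ℝ - 2 * μ * ⟪g1, u1⟫_ℝ + μ * L * ⟪u1, u1⟫_ℝ) ≤ fs)
    (hg : ⟪g1, u0 - u1⟫_ℝ = 0) (hc : ⟪g0, g1⟫_ℝ ≤ ε * ‖g0‖ * ‖g1‖) :
    f1 - fs ≤ ρ ^ 2 * (f0 - fs) := by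
  have hL : 0 < L := hμ.trans hμL
  have hD : 0 < L - μ := sub_pos.2 hμL
  have hS : 0 < L * (1 + ε) + μ * (1 - ε) := by nlinarith
  have hDε : 0 < L * (1 + ε) - μ * (1 - ε) := by nlinarith
  have hρ0 : 0 < ρ := by rw [hρ]; positivity
  have hρ1 : 0 ≤ 1 - ρ := by
    have : 1 - ρ = 2 * μ * (1 - ε) / (L * (1 + ε) + μ * (1 - ε)) := by
      rw [hρ]; field_simp; ring
    rw [this]
    have : 0 ≤ 1 - ε := by linarith
    positivity
  have hN : 0 ≤ 1 / (L * (1 + ε) + μ * (1 - ε)) *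
      (ρ * ε * ⟪g0, g0⟫_ℝ + ε / ρ * ⟪g1, g1⟫_ℝ - 2 * ⟪g0, g1⟫_ℝ) := by
    apply mul_nonneg (by positivity)
    rw [real_inner_self_eq_norm_sq, real_inner_self_eq_norm_sq]
    have h1 : 0 ≤ ε / ρ * (ρ * ‖g0‖ - ‖g1‖) ^ 2 := by positivity
    have h2 : ε / ρ * (ρ * ‖g0‖ - ‖g1‖) ^ 2
      = ρ * ε * ‖g0‖ ^ 2 + ε / ρ * ‖g1‖ ^ 2 - 2 * (ε * ‖g0‖ * ‖g1‖) := by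
      field_simp; ring
    linarith
  have hP : 0 ≤ μ * L / (2 * (L - μ)) *
      ⟪u1 - ρ • u0 + (1 / L) • (ρ • g0 - g1), u1 - ρ • u0 + (1 / L) • (ρ • g0 - g1)⟫_ℝ :=
    mul_nonneg (by positivity) real_inner_self_nonneg
  have hR : 0 ≤ μ * L / (L - μ) * ρ * (1 - ρ) *
      ⟪u0 - (1 / (2 * μ * L)) • (((L - μ) / ρ) • g1 + (L + μ) • g0),
        u0 - (1 / (2 * μ * L)) • (((L - μ) / ρ) • g1 + (L + μ) • g0)⟫_ℝ :=
    mul_nonneg (by positivity) real_inner_self_nonneg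
  have k1 := mul_le_mul_of_nonneg_left h01 hρ0.le
  have k2 := mul_le_mul_of_nonneg_left hs0 (mul_nonneg hρ0.le hρ1)
  have k3 := mul_le_mul_of_nonneg_left hs1 hρ1
  simp only [inner_add_left, inner_add_right, inner_smul_left, inner_smul_right, inner_sub_left,
    inner_sub_right, conj_trivial] at k1 k2 k3 hg hP hR hN
  simp only [real_inner_comm] at *
  generalize ⟪u0, u0⟫_ℝ = u00 at *
  generalize ⟪u1, u1⟫_ℝ = u11 at *
  generalize ⟪g0, g0⟫_ℝ = q00 at *
  generalize ⟪g1, g1⟫_ℝ = q11 at *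
  generalize ⟪g0, g1⟫_ℝ = q01 at *
  generalize ⟪u0, u1⟫_ℝ = u01 at *
  generalize ⟪u0, g0⟫_ℝ = p00 at *
  generalize ⟪u0, g1⟫_ℝ = p01 at *
  generalize ⟪u1, g0⟫_ℝ = p10 at *
  generalize ⟪u1, g1⟫_ℝ = p11 at *
  have hT := add_nonneg (add_nonneg (add_nonneg (add_nonneg (add_nonneg hP hR) hN)
    (sub_nonneg.2 k1)) (sub_nonneg.2 k2)) (sub_nonneg.2 k3)
  refine le_of_sub_nonneg (hT.trans_eq ?_)
  have hD' := hD.ne'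
  have hS' := hS.ne'
  have hDε' := hDε.ne'
  clear hP hR hN k1 k2 k3 hT h01 hs0 hs1 hc
  clear hρ0 hρ1
  subst hρ
  have hp : p01 = p11 := by linarith
  subst hp
  field_simp
  ring

theorem approx_steepest_descent_exact_line_search
    (n : ℕ) (μ L ε : ℝ) (hμ : 0 < μ) (hμL : μ < L) (hε0 : 0 ≤ ε) (hε1 : ε < 1)
    (f : EuclideanSpace ℝ (Fin n) → ℝ)
    (hdiff : Differentiable ℝ f)
    (hsmooth : ∀ a b, ‖gradient f a - gradient f b‖ ≤ L * ‖a - b‖)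
    (hsc : ∀ a b, f a ≥ f b + ⟪gradient f b, a - b⟫_ℝ + μ / 2 * ‖a - b‖ ^ 2)
    (xstar : EuclideanSpace ℝ (Fin n)) (hmin : ∀ y, f xstar ≤ f y)
    (xk dk : EuclideanSpace ℝ (Fin n))
    (hrec : ‖dk - gradient f xk‖ ≤ ε * ‖gradient f xk‖)
    (γk : ℝ) (hls : ∀ t : ℝ, f (xk - γk • dk) ≤ f (xk - t • dk))
    (xk1 : EuclideanSpace ℝ (Fin n)) (hxk1 : xk1 = xk - γk • dk)
    (qε : ℝ) (hqε : qε = μ * (1 - ε) / (L * (1 + ε))) :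
    f xk1 - f xstar ≤ ((1 - qε) / (1 + qε)) ^ 2 * (f xk - f xstar) := by
  have hL : 0 < L := hμ.trans hμL
  have hI := asd_interp f hdiff μ L hμL hsmooth hsc
  have hgs : gradient f xstar = 0 := by
    have h0 : fderiv ℝ f xstar = 0 :=
      IsLocalMin.fderiv_eq_zero (Filter.Eventually.of_forall hmin)
    simp [gradient, h0]
  have hgd : ⟪gradient f xk1, dk⟫_ℝ = 0 := by
    have hd := asd_hasDerivAt_line f hdiff xk (-dk) γk
    have hm : IsLocalMin (fun s : ℝ => f (xk + s • (-dk))) γk := by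
      refine Filter.Eventually.of_forall fun t => ?_
      simpa [sub_eq_add_neg] using hls t
    have := hm.hasDerivAt_eq_zero hd
    rw [hxk1]
    simpa [sub_eq_add_neg] using this
  have hS : 0 < L * (1 + ε) + μ * (1 - ε) := by nlinarith
  have h1ε : 0 < 1 + ε := by linarith
  have hρ : (1 - qε) / (1 + qε)
      = (L * (1 + ε) - μ * (1 - ε)) / (L * (1 + ε) + μ * (1 - ε)) := by
    have hq : 1 + qε = (L * (1 + ε) + μ * (1 - ε)) / (L * (1 + ε)) := by
      rw [hqε]; field_simp
    rw [hq, hqε]; field_simp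
  refine asd_algebra μ L ε _ hμ hμL hε0 hε1 hρ (xk - xstar) (xk1 - xstar)
    (gradient f xk) (gradient f xk1) _ _ _ ?_ ?_ ?_ ?_ ?_
  · have := hI xk xk1
    rwa [sub_sub_sub_cancel_right]
  · have := hI xstar xk
    rw [hgs, ← neg_sub xk xstar] at this
    simpa only [zero_sub, inner_neg_left, inner_neg_right, neg_neg, ← sub_eq_add_neg] using this
  · have := hI xstar xk1
    rw [hgs, ← neg_sub xk1 xstar] at this
    simpa only [zero_sub, inner_neg_left, inner_neg_right, neg_neg, ← sub_eq_add_neg] using this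
  · rw [sub_sub_sub_cancel_right, hxk1, sub_sub_cancel, inner_smul_right, ← hxk1, hgd, mul_zero]
  · have h1 : ⟪gradient f xk, gradient f xk1⟫_ℝ = ⟪-(dk - gradient f xk), gradient f xk1⟫_ℝ := by
      rw [neg_sub, inner_sub_left, real_inner_comm _ dk, hgd, sub_zero]
    rw [h1]
    refine (real_inner_le_norm _ _).trans ?_
    rw [norm_neg]
    gcongr
end

section
/- Let 0 < μ < L < ∞ and q = μ/L. Let f : ℝ^n → ℝ be L-smooth and μ-strongly convex with minimizer x_⋆ and minimal value f_⋆ = f(x_⋆). Let x_{k−1}, d_{k−1} ∈ ℝ^n with ∇f(x_{k−1}) ≠ 0 and ⟨∇f(x_{k−1}), d_{k−1}⟩ = ‖∇f(x_{k−1})‖². Let γ_{k−1} ∈ ℝ minimize γ ↦ f(x_{k−1} − γ d_{k−1}) over ℝ, set x_k = x_{k−1} − γ_{k−1} d_{k−1}, let β_{k−1} = (‖∇f(x_k)‖² − ⟨∇f(x_k), ∇f(x_{k−1})⟩)/‖∇f(x_{k−1})‖², and set d_k = ∇f(x_k) + β_{k−1} d_{k−1} (one Polak–Ribière–Polyak iteration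 with exact line search). Let γ_k ∈ ℝ minimize γ ↦ f(x_k − γ d_k) over ℝ and set x_{k+1} = x_k − γ_k d_k. Then f(x_{k+1}) − f_⋆ ≤ ((1 − q²)/(1 + q²))² (f(x_k) − f_⋆). -/
open scoped InnerProductSpace

section PRPHelpers

variable {n : ℕ}

lemma prp_line_deriv (f : EuclideanSpace ℝ (Fin n) → ℝ) (hdiff : Differentiable ℝ f)
    (b v : EuclideanSpace ℝ (Fin n)) (t : ℝ) :
    HasDerivAt (fun s : ℝ => f (b + s • v)) ⟪gradient f (b + t • v), v⟫_ℝ t := by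
  have h1 := (hdiff (b + t • v)).hasGradientAt.hasFDerivAt
  have h2 : HasDerivAt (fun s : ℝ => b + s • v) v t := by
    simpa using ((hasDerivAt_id t).smul_const v).const_add b
  have h3 := h1.comp_hasDerivAt t h2
  rw [InnerProductSpace.toDual_apply_apply] at h3
  exact h3

lemma prp_descent (L : ℝ) (f : EuclideanSpace ℝ (Fin n) → ℝ) (hdiff : Differentiable ℝ f)
    (hsmooth : ∀ a b, ‖gradient f a - gradient f b‖ ≤ L * ‖a - b‖)
    (b v : EuclideanSpace ℝ (Fin n)) :
    f (b + v) ≤ f b + ⟪gradient f b, v⟫_ℝ + L / 2 * ‖v‖ ^ 2 := by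
  have hd : ∀ t : ℝ, HasDerivAt
      (fun s : ℝ => f (b + s • v) - (s * ⟪gradient f b, v⟫_ℝ + s ^ 2 * (L / 2 * ‖v‖ ^ 2)))
      (⟪gradient f (b + t • v), v⟫_ℝ - (⟪gradient f b, v⟫_ℝ + 2 * t * (L / 2 * ‖v‖ ^ 2))) t := by
    intro t
    have ha := (hasDerivAt_id t).mul_const (⟪gradient f b, v⟫_ℝ)
    have hb := (hasDerivAt_pow 2 t).mul_const (L / 2 * ‖v‖ ^ 2)
    have := (prp_line_deriv f hdiff b v t).sub (ha.add hb)
    exact this.congr_deriv (by norm_num)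
  have hanti : AntitoneOn
      (fun s : ℝ => f (b + s • v) - (s * ⟪gradient f b, v⟫_ℝ + s ^ 2 * (L / 2 * ‖v‖ ^ 2)))
      (Set.Icc 0 1) := by
    apply antitoneOn_of_deriv_nonpos (convex_Icc 0 1)
    · exact fun t _ => (hd t).continuousAt.continuousWithinAt
    · exact fun t _ => (hd t).differentiableAt.differentiableWithinAt
    · intro t ht
      rw [interior_Icc] at ht
      rw [(hd t).deriv]
      have h1 : ⟪gradient f (b + t • v) - gradient f b, v⟫_ℝ ≤
          ‖gradient f (b + t • v) - gradient f b‖ * ‖v‖ := real_inner_le_norm _ _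
      have h2 := hsmooth (b + t • v) b
      rw [add_sub_cancel_left, norm_smul, Real.norm_of_nonneg ht.1.le] at h2
      have h3 := mul_le_mul_of_nonneg_right h2 (norm_nonneg v)
      rw [inner_sub_left] at h1
      nlinarith
  have := hanti (Set.left_mem_Icc.2 zero_le_one) (Set.right_mem_Icc.2 zero_le_one) zero_le_one
  simp only [one_smul, zero_smul, add_zero] at this
  linarith

/-- Interpolation inequality for smooth strongly convex functions. -/
lemma prp_interp (μ L : ℝ) (hμL : μ < L) (f : EuclideanSpace ℝ (Fin n) → ℝ)
    (hdiff : Differentiable ℝ f)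
    (hsmooth : ∀ a b, ‖gradient f a - gradient f b‖ ≤ L * ‖a - b‖)
    (hsc : ∀ a b, f a ≥ f b + ⟪gradient f b, a - b⟫_ℝ + μ / 2 * ‖a - b‖ ^ 2)
    (x y : EuclideanSpace ℝ (Fin n)) :
    ‖gradient f x - gradient f y‖ ^ 2 + μ * L * ‖x - y‖ ^ 2
      - 2 * μ * ⟪gradient f x - gradient f y, x - y⟫_ℝ
      ≤ 2 * (L - μ) * (f x - f y - ⟪gradient f y, x - y⟫_ℝ) := by
  have hpos : 0 < L - μ := sub_pos.2 hμL
  obtain ⟨c, hc⟩ : ∃ c : ℝ, c * (L - μ) = 1 := ⟨(L - μ)⁻¹, inv_mul_cancel₀ hpos.ne'⟩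
  set g := gradient f x - gradient f y with hg
  set s := x - y with hs
  have hgx : gradient f x = gradient f y + g := by rw [hg]; abel
  have h1 := prp_descent L f hdiff hsmooth x (c • (μ • s - g))
  have h2 := hsc (x + c • (μ • s - g)) y
  have e : x + c • (μ • s - g) - y = s + c • (μ • s - g) := by rw [hs]; abel
  rw [e] at h2
  rw [hgx] at h1
  have h3 := h2.le.trans h1
  simp only [← real_inner_self_eq_norm_sq, inner_add_left, inner_add_right, inner_smul_left,
    inner_smul_right, inner_sub_left, inner_sub_right, real_inner_comm g s, conj_trivial] at h3 ⊢
  have h4 := mul_le_mul_of_nonneg_left h3 (mul_nonneg zero_le_two hpos.le)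
  have hc2 : c ^ 2 * (L - μ) ^ 2 = 1 := by rw [← mul_pow, hc, one_pow]
  generalize ⟪g, g⟫_ℝ = gg at *
  generalize ⟪s, s⟫_ℝ = ss at *
  generalize ⟪gradient f y, s⟫_ℝ = ys at *
  generalize ⟪gradient f y, g⟫_ℝ = yg at *
  have hgs : ⟪s, g⟫_ℝ = ⟪g, s⟫_ℝ := real_inner_comm _ _
  try rw [hgs] at *
  generalize ⟪g, s⟫_ℝ = gs at *
  have key : 2 * (L - μ) * (f x + (c * (μ * ys - yg) + c * (μ * gs - gg))
      + L / 2 * (c ^ 2 * (μ ^ 2 * ss - 2 * μ * gs + gg))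
      - (f y + (ys + c * (μ * ys - yg)) + μ / 2 * (ss + 2 * c * (μ * ss - gs)
        + c ^ 2 * (μ ^ 2 * ss - 2 * μ * gs + gg))))
      = 2 * (L - μ) * (f x - f y - ys) - (gg + μ * L * ss - 2 * μ * gs) := by
    linear_combination (2 * (μ * gs - gg) - 2 * μ * (μ * ss - gs)) * hc
      + (μ ^ 2 * ss - 2 * μ * gs + gg) * hc2
  linarith

lemma prp_fermat (f : EuclideanSpace ℝ (Fin n) → ℝ) (hdiff : Differentiable ℝ f)
    (x d : EuclideanSpace ℝ (Fin n)) (γ : ℝ)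
    (h : ∀ t : ℝ, f (x - γ • d) ≤ f (x - t • d)) :
    ⟪gradient f (x - γ • d), d⟫_ℝ = 0 := by
  have hd := prp_line_deriv f hdiff x (-d) γ
  have hm : IsLocalMin (fun s : ℝ => f (x + s • (-d))) γ := by
    apply Filter.Eventually.of_forall
    intro t
    simpa [sub_eq_add_neg] using h t
  have := hm.hasDerivAt_eq_zero hd
  simpa [sub_eq_add_neg] using this

/-- Bound on the PRP direction. -/
lemma prp_dir_bound (m L : ℝ) (hm : 0 < m) (hmL : m < L)
    (g p d : EuclideanSpace ℝ (Fin n)) (γ β : ℝ) (hp : p ≠ 0)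
    (hpd : ⟪p, d⟫_ℝ = ‖p‖ ^ 2) (hgd : ⟪g, d⟫_ℝ = 0)
    (hint : ‖p - g‖ ^ 2 + m * L * ‖γ • d‖ ^ 2 ≤ (L + m) * ⟪p - g, γ • d⟫_ℝ)
    (hβ : β = (‖g‖ ^ 2 - ⟪g, p⟫_ℝ) / ‖p‖ ^ 2) :
    4 * m * L * ‖g + β • d‖ ^ 2 ≤ (L + m) ^ 2 * ‖g‖ ^ 2 := by
  have hL : 0 < L := hm.trans hmL
  have hG : 0 < ‖p‖ ^ 2 := by positivity
  have hd : d ≠ 0 := by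
    rintro rfl
    rw [inner_zero_right] at hpd
    exact hG.ne hpd
  have hD : 0 < ‖d‖ ^ 2 := by positivity
  have hβG : β * ‖p‖ ^ 2 = - ⟪g, p - g⟫_ℝ := by
    rw [hβ, div_mul_cancel₀ _ hG.ne', inner_sub_right, real_inner_self_eq_norm_sq]; ring
  have hyd : ⟪p - g, d⟫_ℝ = ‖p‖ ^ 2 := by rw [inner_sub_left, hpd, hgd, sub_zero]
  have hnd : ‖g + β • d‖ ^ 2 = ‖g‖ ^ 2 + β ^ 2 * ‖d‖ ^ 2 := by
    rw [norm_add_sq_real, inner_smul_right, hgd, norm_smul, mul_pow, Real.norm_eq_abs, sq_abs]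
    ring
  rw [norm_smul, mul_pow, Real.norm_eq_abs, sq_abs, inner_smul_right, hyd] at hint
  generalize p - g = y at *
  -- Cauchy-Schwarz with the component orthogonal to d
  have hcs : ⟪g, ‖d‖ ^ 2 • y - ‖p‖ ^ 2 • d⟫_ℝ ^ 2
      ≤ ‖g‖ ^ 2 * ‖‖d‖ ^ 2 • y - ‖p‖ ^ 2 • d‖ ^ 2 := by
    have := abs_real_inner_le_norm g (‖d‖ ^ 2 • y - ‖p‖ ^ 2 • d)
    rw [← mul_pow, ← sq_abs]
    exact pow_le_pow_left₀ (abs_nonneg _) this 2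
  have hw : ‖‖d‖ ^ 2 • y - ‖p‖ ^ 2 • d‖ ^ 2
      = ‖d‖ ^ 2 * (‖d‖ ^ 2 * ‖y‖ ^ 2 - (‖p‖ ^ 2) ^ 2) := by
    rw [norm_sub_sq_real, inner_smul_left, inner_smul_right, hyd, norm_smul, norm_smul]
    simp
    ring
  rw [hw, inner_sub_right, inner_smul_right, inner_smul_right, hgd, mul_zero, sub_zero] at hcs
  rw [hnd]
  have hgg : 0 ≤ ‖g‖ ^ 2 := by positivity
  generalize ‖g‖ ^ 2 = gg at *
  generalize ‖p‖ ^ 2 = G at *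
  generalize ‖d‖ ^ 2 = D at *
  generalize ‖y‖ ^ 2 = yy at *
  have hi : ⟪g, y⟫_ℝ = - (β * G) := by linarith
  rw [hi] at hcs
  have h1 : D * (D * (β * G) ^ 2) ≤ D * (gg * (D * yy - G ^ 2)) := by nlinarith
  have h2 := le_of_mul_le_mul_left h1 hD
  have h3 : 4 * m * L * (D * yy - G ^ 2) ≤ (L - m) ^ 2 * G ^ 2 := by
    have ha := mul_le_mul_of_nonneg_left hint (by positivity : 0 ≤ 4 * m * L * D)
    nlinarith [sq_nonneg (2 * m * L * (γ * D) - (L + m) * G)]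
  have h4 := mul_le_mul_of_nonneg_left h3 hgg
  have h5 := mul_le_mul_of_nonneg_left h2 (by positivity : 0 ≤ 4 * m * L)
  have h6 : G ^ 2 * (4 * m * L * (β ^ 2 * D)) ≤ G ^ 2 * ((L - m) ^ 2 * gg) := by linarith
  have h7 := le_of_mul_le_mul_left h6 (by positivity)
  linarith

/-- Scalar certificate. -/
lemma prp_scalar (m L F0 F1 uu uv vv u0 u1 v0 v1 g00 g01 g11 : ℝ) (hm : 0 < m) (hmL : m < L)
    (h1 : (g00 - 2 * g01 + g11) + m * L * (uu - 2 * uv + vv) - 2 * m * (u0 - v0 - u1 + v1)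
      ≤ 2 * (L - m) * (F0 - F1 - (u1 - v1)))
    (h2 : g00 + m * L * uu - 2 * m * u0 ≤ 2 * (L - m) * (-F0 + u0))
    (h3 : g11 + m * L * vv - 2 * m * v1 ≤ 2 * (L - m) * (-F1 + v1))
    (h4 : u1 = v1)
    (h5 : 2 * (L + m) ^ 2 * (L ^ 2 + m ^ 2) * g01
      ≤ (L ^ 2 - m ^ 2) ^ 2 * g00 + (L ^ 2 + m ^ 2) ^ 2 * g11)
    (h6 : 0 ≤ (L - m) ^ 4 * (L + m) ^ 2 * uu + (L + m) ^ 2 * (L ^ 2 + m ^ 2) ^ 2 * vv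
      + 4 * (L ^ 2 + m ^ 2) ^ 2 * g11
      - 2 * (L - m) ^ 2 * (L + m) ^ 2 * (L ^ 2 + m ^ 2) * uv
      + 4 * (L - m) ^ 2 * (L + m) * (L ^ 2 + m ^ 2) * u1
      - 4 * (L + m) * (L ^ 2 + m ^ 2) ^ 2 * v1)
    (h7 : 0 ≤ (L + m) ^ 4 * uu + (L ^ 2 + m ^ 2) ^ 2 * vv + 4 * (L + m) ^ 2 * g00
      - 2 * (L + m) ^ 2 * (L ^ 2 + m ^ 2) * uv - 4 * (L + m) ^ 3 * u0
      + 4 * (L + m) * (L ^ 2 + m ^ 2) * v0) :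
    F1 ≤ ((L ^ 2 - m ^ 2) / (L ^ 2 + m ^ 2)) ^ 2 * F0 := by
  have hL : 0 < L := hm.trans hmL
  have hN : 0 < L ^ 2 + m ^ 2 := by positivity
  have hd : 0 < L - m := by linarith
  subst h4
  rw [div_pow, div_mul_eq_mul_div, le_div_iff₀ (by positivity)]
  have k1 := mul_le_mul_of_nonneg_left h1
    (by positivity : 0 ≤ 2 * (L - m) * (L + m) ^ 2 * (L ^ 2 + m ^ 2))
  have k2 := mul_le_mul_of_nonneg_left h2
    (by positivity : 0 ≤ 4 * (L - m) * (L + m) ^ 2 * m ^ 2)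
  have k3 := mul_le_mul_of_nonneg_left h3
    (by positivity : 0 ≤ 4 * (L + m) * m ^ 2 * (L ^ 2 + m ^ 2))
  have k5 := mul_le_mul_of_nonneg_left h5 (by positivity : 0 ≤ 2 * (L - m))
  have k6 := mul_nonneg hm.le h6
  have k7 := mul_nonneg (by positivity : 0 ≤ m * (L - m) * (L + m)) h7
  have hp : 0 < 4 * (L - m) * (L + m) := by positivity
  refine le_of_mul_le_mul_left ?_ hp
  linarith

lemma prp_inexact (m L : ℝ) (hm : 0 < m) (hmL : m < L)
    (g d h : EuclideanSpace ℝ (Fin n))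
    (hgd : ⟪g, d⟫_ℝ = ‖g‖ ^ 2) (hhd : ⟪h, d⟫_ℝ = 0)
    (hb : 4 * m * L * ‖d‖ ^ 2 ≤ (L + m) ^ 2 * ‖g‖ ^ 2) :
    2 * (L + m) ^ 2 * (L ^ 2 + m ^ 2) * ⟪g, h⟫_ℝ
      ≤ (L ^ 2 - m ^ 2) ^ 2 * ‖g‖ ^ 2 + (L ^ 2 + m ^ 2) ^ 2 * ‖h‖ ^ 2 := by
  have hL : 0 < L := hm.trans hmL
  have h0 : 0 ≤ ‖(L + m) ^ 2 • g - (4 * m * L) • d - (L ^ 2 + m ^ 2) • h‖ ^ 2 := by positivity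
  have hdg : ⟪d, g⟫_ℝ = ‖g‖ ^ 2 := by rw [real_inner_comm, hgd]
  have hdh : ⟪d, h⟫_ℝ = 0 := by rw [real_inner_comm, hhd]
  have hhg : ⟪h, g⟫_ℝ = ⟪g, h⟫_ℝ := real_inner_comm _ _
  rw [← real_inner_self_eq_norm_sq] at h0
  simp only [inner_sub_left, inner_sub_right, inner_smul_left, inner_smul_right, conj_trivial,
    hdg, hdh, hhg, hgd, hhd, real_inner_self_eq_norm_sq] at h0
  have h1 := mul_le_mul_of_nonneg_left hb (by positivity : 0 ≤ 4 * m * L)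
  nlinarith

end PRPHelpers

/-- Worst-case bound for Polak–Ribière–Polyak: after one PRP iteration with exact
line search followed by an exact line search along the resulting direction, the
function-value gap contracts by `((1 − q²)/(1 + q²))²`, where `q = μ/L`. -/
theorem prp_worst_case_bound
    (n : ℕ) (μ L : ℝ) (hμ : 0 < μ) (hμL : μ < L)
    (q : ℝ) (hq : q = μ / L)
    (f : EuclideanSpace ℝ (Fin n) → ℝ)
    (hdiff : Differentiable ℝ f)
    (hsmooth : ∀ a b, ‖gradient f a - gradient f b‖ ≤ L * ‖a - b‖)
    (hsc : ∀ a b, f a ≥ f b + ⟪gradient f b, a - b⟫_ℝ + μ / 2 * ‖a - b‖ ^ 2)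
    (xstar : EuclideanSpace ℝ (Fin n)) (hmin : ∀ y, f xstar ≤ f y)
    (xkm dkm : EuclideanSpace ℝ (Fin n))
    (hgkm : gradient f xkm ≠ 0)
    (hdir : ⟪gradient f xkm, dkm⟫_ℝ = ‖gradient f xkm‖ ^ 2)
    (γkm : ℝ) (hlsm : ∀ t : ℝ, f (xkm - γkm • dkm) ≤ f (xkm - t • dkm))
    (xk : EuclideanSpace ℝ (Fin n)) (hxk : xk = xkm - γkm • dkm)
    (βkm : ℝ)
    (hβ : βkm = (‖gradient f xk‖ ^ 2 - ⟪gradient f xk, gradient f xkm⟫_ℝ)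
        / ‖gradient f xkm‖ ^ 2)
    (dk : EuclideanSpace ℝ (Fin n)) (hdk : dk = gradient f xk + βkm • dkm)
    (γk : ℝ) (hls : ∀ t : ℝ, f (xk - γk • dk) ≤ f (xk - t • dk))
    (xk1 : EuclideanSpace ℝ (Fin n)) (hxk1 : xk1 = xk - γk • dk) :
    f xk1 - f xstar ≤ ((1 - q ^ 2) / (1 + q ^ 2)) ^ 2 * (f xk - f xstar) := by
  have hL : 0 < L := hμ.trans hμL
  have hint := prp_interp μ L hμL f hdiff hsmooth hsc
  -- gradient vanishes at the minimizer
  have hgs : gradient f xstar = 0 := by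
    have hm : IsLocalMin f xstar := Filter.Eventually.of_forall hmin
    rw [gradient, hm.fderiv_eq_zero, map_zero]
  have hgd : ⟪gradient f xk, dkm⟫_ℝ = 0 := by
    rw [hxk]; exact prp_fermat f hdiff xkm dkm γkm hlsm
  have hhd : ⟪gradient f xk1, dk⟫_ℝ = 0 := by
    rw [hxk1]; exact prp_fermat f hdiff xk dk γk hls
  have hb : 4 * μ * L * ‖dk‖ ^ 2 ≤ (L + μ) ^ 2 * ‖gradient f xk‖ ^ 2 := by
    rw [hdk]
    refine prp_dir_bound μ L hμ hμL (gradient f xk) (gradient f xkm) dkm γkm βkm hgkm hdir hgd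
      ?_ hβ
    have e1 : γkm • dkm = xkm - xk := by rw [hxk]; abel
    have i1 := hint xkm xk
    have i2 := hint xk xkm
    rw [e1]
    rw [← neg_sub xkm xk, ← neg_sub (gradient f xkm) (gradient f xk), norm_neg, norm_neg,
      inner_neg_neg, inner_neg_right] at i2
    have e2 : ⟪gradient f xkm - gradient f xk, xkm - xk⟫_ℝ
      = ⟪gradient f xkm, xkm - xk⟫_ℝ - ⟪gradient f xk, xkm - xk⟫_ℝ := inner_sub_left _ _ _
    rw [e2] at i1 i2 ⊢
    linarith
  have hgdk : ⟪gradient f xk, dk⟫_ℝ = ‖gradient f xk‖ ^ 2 := by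
    rw [hdk, inner_add_right, inner_smul_right, hgd, real_inner_self_eq_norm_sq]; ring
  have h5 := prp_inexact μ L hμ hμL _ dk _ hgdk hhd hb
  have h4 : ⟪gradient f xk1, xk - xstar⟫_ℝ = ⟪gradient f xk1, xk1 - xstar⟫_ℝ := by
    have : xk - xstar = (xk1 - xstar) + γk • dk := by rw [hxk1]; abel
    rw [this, inner_add_right, inner_smul_right, hhd]; ring
  have i1 := hint xk xk1
  have i2 := hint xstar xk
  have i3 := hint xstar xk1
  have e1 : xk - xk1 = (xk - xstar) - (xk1 - xstar) := by abel
  rw [e1] at i1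
  rw [← neg_sub xk xstar, hgs, zero_sub] at i2
  rw [← neg_sub xk1 xstar, hgs, zero_sub] at i3
  have hq2 : (1 - q ^ 2) / (1 + q ^ 2) = (L ^ 2 - μ ^ 2) / (L ^ 2 + μ ^ 2) := by
    rw [hq]; field_simp
  rw [hq2]
  generalize gradient f xk = g at *
  generalize gradient f xk1 = h at *
  generalize xk - xstar = u at *
  generalize xk1 - xstar = v at *
  have hhg : ⟪h, g⟫_ℝ = ⟪g, h⟫_ℝ := real_inner_comm _ _
  have hvu : ⟪v, u⟫_ℝ = ⟪u, v⟫_ℝ := real_inner_comm _ _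
  have hug : ⟪u, g⟫_ℝ = ⟪g, u⟫_ℝ := real_inner_comm _ _
  have huh : ⟪u, h⟫_ℝ = ⟪h, u⟫_ℝ := real_inner_comm _ _
  have hvg : ⟪v, g⟫_ℝ = ⟪g, v⟫_ℝ := real_inner_comm _ _
  have hvh : ⟪v, h⟫_ℝ = ⟪h, v⟫_ℝ := real_inner_comm _ _
  have h6 : 0 ≤ ‖((L - μ) ^ 2 * (L + μ)) • u - ((L + μ) * (L ^ 2 + μ ^ 2)) • v
      + (2 * (L ^ 2 + μ ^ 2)) • h‖ ^ 2 := by positivity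
  have h7 : 0 ≤ ‖(L ^ 2 + μ ^ 2) • v - ((L + μ) ^ 2) • u + (2 * (L + μ)) • g‖ ^ 2 := by
    positivity
  simp only [← real_inner_self_eq_norm_sq] at i1 i2 i3 h5 h6 h7
  simp only [inner_sub_left, inner_sub_right, inner_add_left, inner_add_right, inner_smul_left,
    inner_smul_right, inner_neg_left, inner_neg_right, conj_trivial, hhg, hvu, hug, huh, hvg,
    hvh] at i1 i2 i3 h5 h6 h7
  refine prp_scalar μ L (f xk - f xstar) (f xk1 - f xstar) ⟪u, u⟫_ℝ ⟪u, v⟫_ℝ ⟪v, v⟫_ℝ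
    ⟪g, u⟫_ℝ ⟪h, u⟫_ℝ ⟪g, v⟫_ℝ ⟪h, v⟫_ℝ ⟪g, g⟫_ℝ ⟪g, h⟫_ℝ ⟪h, h⟫_ℝ hμ hμL ?_ ?_ ?_ h4 h5 ?_ ?_
  · linarith
  · linarith
  · linarith
  · linarith
  · linarith
end

section
/- Let 0 < μ < L < ∞ and q = μ/L. Let f : ℝ^n → ℝ be L-smooth and μ-strongly convex with minimizer x_⋆ and minimal value f_⋆ = f(x_⋆). Let sequences (x_i), (d_i) in ℝ^n and (γ_i), (β_i) in ℝ be generated by the Fletcher–Reeves method with exact line search: d_0 = ∇f(x_0); for each i, γ_i minimizes γ ↦ f(x_i − γ d_i) over ℝ, x_{i+1} = x_i − γ_i d_i, β_i = ‖∇f(x_{i+1})‖²/‖∇f(x_i)‖², and d_{i+1} = ∇f(x_{i+1}) + β_i d_i. Suppose ∇f(x_i) ≠ 0 for all i ≤ k. Then f(x_{k+1}) − f_⋆ ≤ ((1 − q(1 − ε_k)/(1 + ε_k)) / (1 + q(1 − ε_k)/(1 + ε_k)))² (f(x_k) − f_⋆), where ε_k = √( (1 − q)² k² / (4q + (1 −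 q)² k²) ). -/
open scoped InnerProductSpace

section FRHelpers

variable {E : Type*} [NormedAddCommGroup E] [InnerProductSpace ℝ E] [CompleteSpace E]

theorem fr_line_deriv (f : E → ℝ) (hdiff : Differentiable ℝ f) (a v : E) (t : ℝ) :
    HasDerivAt (fun s : ℝ => f (a + s • v)) ⟪gradient f (a + t • v), v⟫_ℝ t := by
  have h1 : HasGradientAt f (gradient f (a + t • v)) (a + t • v) :=
    (hdiff _).hasGradientAt
  have h2 := h1.hasFDerivAt
  have h3 : HasDerivAt (fun s : ℝ => a + s • v) v t := by
    simpa using ((hasDerivAt_id t).smul_const v).const_add a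
  have h4 := h2.comp_hasDerivAt t h3
  exact h4

theorem fr_descent (f : E → ℝ) (hdiff : Differentiable ℝ f) (L : ℝ)
    (hsmooth : ∀ a b, ‖gradient f a - gradient f b‖ ≤ L * ‖a - b‖) (a v : E) :
    f (a + v) ≤ f a + ⟪gradient f a, v⟫_ℝ + L / 2 * ‖v‖ ^ 2 := by
  have hder : ∀ t : ℝ, HasDerivAt
      (fun s : ℝ => f (a + s • v) - s * ⟪gradient f a, v⟫_ℝ - s ^ 2 * (L / 2 * ‖v‖ ^ 2))
      (⟪gradient f (a + t • v), v⟫_ℝ - ⟪gradient f a, v⟫_ℝ - 2 * t * (L / 2 * ‖v‖ ^ 2)) t := by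
    intro t
    have h1 := fr_line_deriv f hdiff a v t
    have h2 := (hasDerivAt_id t).mul_const ⟪gradient f a, v⟫_ℝ
    have h3 := ((hasDerivAt_id t).pow 2).mul_const (L / 2 * ‖v‖ ^ 2)
    have h4 := (h1.sub h2).sub h3
    refine h4.congr_deriv ?_
    simp only [id, one_mul, mul_one]
    norm_num
  have hanti := antitoneOn_of_deriv_nonpos (convex_Icc (0 : ℝ) 1)
    (f := fun s : ℝ => f (a + s • v) - s * ⟪gradient f a, v⟫_ℝ - s ^ 2 * (L / 2 * ‖v‖ ^ 2))
    (fun t _ => (hder t).continuousAt.continuousWithinAt)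
    (fun t _ => (hder t).differentiableAt.differentiableWithinAt)
    (by
      intro t ht
      rw [interior_Icc] at ht
      rw [(hder t).deriv, ← inner_sub_left]
      have h1 := real_inner_le_norm (gradient f (a + t • v) - gradient f a) v
      have h2 := hsmooth (a + t • v) a
      rw [add_sub_cancel_left, norm_smul, Real.norm_of_nonneg ht.1.le] at h2
      have h3 := mul_le_mul_of_nonneg_right h2 (norm_nonneg v)
      nlinarith)
  have := hanti (Set.left_mem_Icc.2 zero_le_one) (Set.right_mem_Icc.2 zero_le_one) zero_le_one
  simp only [one_smul, zero_smul, add_zero, one_mul, zero_mul, one_pow, sub_zero, ne_eq, OfNat.ofNat_ne_zero, not_false_eq_true, zero_pow] at this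
  linarith

/-- the two-point interpolation inequality -/
theorem fr_interp (f : E → ℝ) (hdiff : Differentiable ℝ f) (μ L : ℝ) (hμL : μ < L)
    (hsmooth : ∀ a b, ‖gradient f a - gradient f b‖ ≤ L * ‖a - b‖)
    (hsc : ∀ a b, f a ≥ f b + ⟪gradient f b, a - b⟫_ℝ + μ / 2 * ‖a - b‖ ^ 2) (a b : E) :
    ‖gradient f a - gradient f b‖ ^ 2 + μ * L * ‖a - b‖ ^ 2
      - 2 * μ * ⟪gradient f a - gradient f b, a - b⟫_ℝ
      ≤ 2 * (L - μ) * (f a - f b - ⟪gradient f b, a - b⟫_ℝ) := by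
  have hp : 0 < L - μ := by linarith
  set g := gradient f a with hg
  set g' := gradient f b with hg'
  set w := a - b with hw
  set c := (L - μ)⁻¹ with hc
  have hc1 : c * (L - μ) = 1 := inv_mul_cancel₀ hp.ne'
  have h1 := fr_descent f hdiff L hsmooth a (-(c • (g - g' - μ • w)))
  have h2 := hsc (a + -(c • (g - g' - μ • w))) b
  have e : a + -(c • (g - g' - μ • w)) - b = w - c • (g - g' - μ • w) := by
    rw [hw]; abel
  rw [e] at h2
  rw [← hg] at h1
  rw [← hg'] at h2
  have h3 := h2.le.trans h1
  simp only [norm_sub_sq_real, norm_neg, norm_smul, mul_pow, inner_sub_left, inner_sub_right,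
    inner_neg_right, real_inner_smul_left, real_inner_smul_right, Real.norm_eq_abs, sq_abs,
    real_inner_self_eq_norm_sq] at h3 ⊢
  rw [real_inner_comm w g, real_inner_comm w g'] at *
  rw [real_inner_comm g g'] at *
  have h4 := mul_le_mul_of_nonneg_left h3 (by linarith : (0:ℝ) ≤ 2 * (L - μ))
  linear_combination h4 + (c * (L - μ) - 1) * (‖g‖ ^ 2 - 2 * ⟪g, g'⟫_ℝ + ‖g'‖ ^ 2 - 2 * μ * (⟪w, g⟫_ℝ - ⟪w, g'⟫_ℝ) + μ ^ 2 * ‖w‖ ^ 2) * hc1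

theorem fr_ratio_step (μ L : ℝ) (hμ : 0 < μ) (hμL : μ < L) (g g' d : E) (γ τ a : ℝ)
    (hτ : 0 ≤ τ) (hτ2 : τ ^ 2 = (L - μ) ^ 2 / (4 * μ * L)) (ha : 0 ≤ a)
    (hG : g ≠ 0) (hgd : ⟪g, d⟫_ℝ = ‖g‖ ^ 2) (hgd' : ⟪g', d⟫_ℝ = 0)
    (hco : ‖g - g'‖ ^ 2 + μ * L * (γ ^ 2 * ‖d‖ ^ 2) ≤ (L + μ) * (γ * ‖g‖ ^ 2))
    (hd : ‖d‖ ^ 2 ≤ (1 + a ^ 2) * ‖g‖ ^ 2) :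
    ‖g'‖ ^ 2 * ‖d‖ ^ 2 ≤ (τ + a) ^ 2 * (‖g‖ ^ 2) ^ 2 := by
  have hgpos : 0 < ‖g‖ := norm_pos_iff.2 hG
  have hdpos : 0 < ‖d‖ := by
    rw [norm_pos_iff]; rintro rfl
    rw [inner_zero_right] at hgd
    exact (pow_pos hgpos 2).ne hgd
  set G := ‖g‖ ^ 2 with hGd
  set D := ‖d‖ ^ 2 with hDd
  have hGp : 0 < G := by positivity
  have hDp : 0 < D := by positivity
  have hL : 0 < L := hμ.trans hμL
  have n1 : ‖D • g - G • d‖ ^ 2 = D * (D * G - G ^ 2) := by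
    rw [norm_sub_sq_real, norm_smul, norm_smul, real_inner_smul_left, real_inner_smul_right, hgd,
      mul_pow, mul_pow, Real.norm_eq_abs, Real.norm_eq_abs, sq_abs, sq_abs, ← hGd, ← hDd]
    ring
  have n2 : ‖D • g' - (D • g - G • d)‖ ^ 2 = D ^ 2 * ‖g - g'‖ ^ 2 - D * G ^ 2 := by
    rw [norm_sub_sq_real, n1, norm_sub_sq_real g g', norm_smul, inner_sub_right,
      real_inner_smul_left, real_inner_smul_left,
      real_inner_smul_right, real_inner_smul_right, hgd', real_inner_comm g g',
      mul_pow, Real.norm_eq_abs, sq_abs, ← hGd]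
    ring
  have b1 : ‖D • g - G • d‖ ≤ ‖d‖ * a * G := by
    apply abs_le_of_sq_le_sq' _ (by positivity) |>.2
    rw [n1, mul_pow, mul_pow, ← hDd]
    have := mul_le_mul_of_nonneg_left hd (mul_pos hDp hGp).le
    nlinarith
  have key : (L + μ) * γ * G * D - μ * L * γ ^ 2 * D ^ 2 - G ^ 2 ≤ τ ^ 2 * G ^ 2 := by
    rw [hτ2, div_mul_eq_mul_div, le_div_iff₀ (by positivity)]
    nlinarith [sq_nonneg (2 * μ * L * γ * D - (L + μ) * G)]
  have b2 : ‖D • g' - (D • g - G • d)‖ ≤ ‖d‖ * τ * G := by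
    apply abs_le_of_sq_le_sq' _ (by positivity) |>.2
    rw [n2, mul_pow, mul_pow, ← hDd]
    have h1 := mul_le_mul_of_nonneg_left hco (sq_nonneg D)
    have h2 := mul_le_mul_of_nonneg_left key hDp.le
    nlinarith
  have b3 : ‖D • g'‖ ≤ ‖d‖ * (τ + a) * G := by
    have := norm_add_le (D • g' - (D • g - G • d)) (D • g - G • d)
    rw [sub_add_cancel] at this
    nlinarith
  have b4 := pow_le_pow_left₀ (norm_nonneg _) b3 2
  rw [norm_smul, mul_pow, mul_pow, mul_pow, Real.norm_eq_abs, sq_abs, ← hDd] at b4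
  refine le_of_mul_le_mul_left ?_ hDp
  nlinarith

/-- normalised (`L = 1`, minimiser at the origin) one-step bound -/
theorem fr_one_step (q ε : ℝ) (hq : 0 < q) (hq1 : q < 1) (hε : 0 ≤ ε) (hε1 : ε < 1)
    (x0 x1 g0 g1 : E) (f0 f1 : ℝ)
    (I01 : ‖g0 - g1‖ ^ 2 + q * ‖x0 - x1‖ ^ 2 - 2 * q * ⟪g0 - g1, x0 - x1⟫_ℝ
      ≤ 2 * (1 - q) * (f0 - f1 - ⟪g1, x0 - x1⟫_ℝ))
    (I0 : ‖g0‖ ^ 2 + q * ‖x0‖ ^ 2 - 2 * q * ⟪g0, x0⟫_ℝ ≤ 2 * (1 - q) * (⟪g0, x0⟫_ℝ - f0))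
    (I1 : ‖g1‖ ^ 2 + q * ‖x1‖ ^ 2 - 2 * q * ⟪g1, x1⟫_ℝ ≤ 2 * (1 - q) * (⟪g1, x1⟫_ℝ - f1))
    (ho : ⟪g1, x0 - x1⟫_ℝ = 0) (hin : ⟪g0, g1⟫_ℝ ≤ ε * (‖g0‖ * ‖g1‖)) :
    f1 ≤ ((1 - q * ((1 - ε) / (1 + ε))) / (1 + q * ((1 - ε) / (1 + ε)))) ^ 2 * f0 := by
  set k := (1 - ε) / (1 + ε) with hk
  have hk0 : 0 < k := by apply div_pos <;> linarith
  have hk1 : k ≤ 1 := by rw [hk, div_le_one (by linarith)]; linarith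
  have hqk : q * k < 1 := by nlinarith
  have hqk0 : 0 < q * k := by positivity
  have hεk : ε * (1 + k) = 1 - k := by rw [hk]; field_simp; ring
  set r := (1 - q * k) / (1 + q * k) with hr
  have hr0 : 0 < r := by apply div_pos <;> linarith
  have hr1 : r < 1 := by rw [hr, div_lt_one (by linarith)]; linarith
  have hG : 0 ≤ (1 - k) * r * ‖g0‖ ^ 2 - 2 * (1 + k) * ⟪g0, g1⟫_ℝ + (1 - k) * ‖g1‖ ^ 2 / r := by
    have h1 : 0 ≤ (1 - k) / r * (r * ‖g0‖ - ‖g1‖) ^ 2 :=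
      mul_nonneg (div_nonneg (by linarith) hr0.le) (sq_nonneg _)
    have h2 : (1 - k) / r * (r * ‖g0‖ - ‖g1‖) ^ 2
      = (1 - k) * r * ‖g0‖ ^ 2 - 2 * (1 - k) * (‖g0‖ * ‖g1‖) + (1 - k) * ‖g1‖ ^ 2 / r := by
      field_simp; ring
    have h3 := mul_le_mul_of_nonneg_left hin (by linarith : (0:ℝ) ≤ 1 + k)
    have h4 : (1 + k) * (ε * (‖g0‖ * ‖g1‖)) = (1 - k) * (‖g0‖ * ‖g1‖) := by
      rw [← hεk]; ring
    linarith
  rw [ho] at I01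
  have s1 := sq_nonneg ‖x1 - r • x0 + (r • g0 - g1)‖
  have s2 := sq_nonneg ‖(2 * q * r) • x0 - ((r * (1 + q)) • g0 + (1 - q) • g1)‖
  simp only [norm_sub_sq_real, norm_add_sq_real, norm_smul, mul_pow, inner_sub_left,
    inner_sub_right, inner_add_right, inner_add_left,
    real_inner_smul_left, real_inner_smul_right, Real.norm_eq_abs, sq_abs] at I01 I0 I1 ho s1 s2
  rw [real_inner_comm x0 x1] at *
  rw [real_inner_comm x0 g0] at *
  rw [real_inner_comm x0 g1] at *
  rw [real_inner_comm x1 g0] at *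
  rw [real_inner_comm x1 g1] at *
  have hs : 0 < 1 - r := by linarith
  have hkr : k = (1 - r) / (q * (1 + r)) := by
    rw [hr]; field_simp; ring
  have hG' : 0 ≤ (q * (1 + r) - (1 - r)) * r ^ 2 * ‖g0‖ ^ 2
      - 2 * (q * (1 + r) + (1 - r)) * r * ⟪g0, g1⟫_ℝ + (q * (1 + r) - (1 - r)) * ‖g1‖ ^ 2 := by
    have h := mul_nonneg (mul_pos (mul_pos hr0 hq) (by linarith : 0 < 1 + r)).le hG
    have e : q * (1 + r) * k = 1 - r := by rw [hkr]; field_simp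
    have e2 : r * q * (1 + r) * ((1 - k) * r * ‖g0‖ ^ 2 - 2 * (1 + k) * ⟪g0, g1⟫_ℝ
        + (1 - k) * ‖g1‖ ^ 2 / r) = (q * (1 + r) - q * (1 + r) * k) * r ^ 2 * ‖g0‖ ^ 2
      - 2 * (q * (1 + r) + q * (1 + r) * k) * r * ⟪g0, g1⟫_ℝ
      + (q * (1 + r) - q * (1 + r) * k) * ‖g1‖ ^ 2 := by
      field_simp
    rw [e2, e] at h
    exact h
  have hqr : 0 < 2 * q * r := by positivity
  have t1 := mul_le_mul_of_nonneg_left I01 (mul_pos hqr hr0).le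
  have t2 := mul_le_mul_of_nonneg_left I0 (mul_pos hqr (mul_pos hr0 hs)).le
  have t3 := mul_le_mul_of_nonneg_left I1 (mul_pos hqr hs).le
  have t4 := mul_nonneg (mul_pos hqr hq).le s1
  have t5 := mul_nonneg hs.le s2
  have t6 := mul_nonneg (by linarith : 0 ≤ 1 - q) hG'
  clear_value r k
  refine le_of_mul_le_mul_left ?_ (mul_pos hqr (by linarith : 0 < 2 * (1 - q)))
  linear_combination t1 + t2 + t3 + t4 + t5 + t6 - 2 * q * r * (2 * (1 - r) * (1 - q)) * ho

end FRHelpers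

/-- Worst-case bound for the Fletcher–Reeves method with exact line search:
after `k` iterations, one more iteration contracts the function-value gap by
`((1 − q(1 − ε_k)/(1 + ε_k))/(1 + q(1 − ε_k)/(1 + ε_k)))²`, where `q = μ/L` and
`ε_k = √((1 − q)²k²/(4q + (1 − q)²k²))`. -/
theorem fr_convergence_bound
    (n : ℕ) (μ L : ℝ) (hμ : 0 < μ) (hμL : μ < L)
    (q : ℝ) (hq : q = μ / L)
    (f : EuclideanSpace ℝ (Fin n) → ℝ)
    (hdiff : Differentiable ℝ f)
    (hsmooth : ∀ a b, ‖gradient f a - gradient f b‖ ≤ L * ‖a - b‖)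
    (hsc : ∀ a b, f a ≥ f b + ⟪gradient f b, a - b⟫_ℝ + μ / 2 * ‖a - b‖ ^ 2)
    (xstar : EuclideanSpace ℝ (Fin n)) (hmin : ∀ y, f xstar ≤ f y)
    (x d : ℕ → EuclideanSpace ℝ (Fin n)) (γ β : ℕ → ℝ)
    (hd0 : d 0 = gradient f (x 0))
    (hls : ∀ i, ∀ t : ℝ, f (x i - γ i • d i) ≤ f (x i - t • d i))
    (hx : ∀ i, x (i + 1) = x i - γ i • d i)
    (hβ : ∀ i, β i = ‖gradient f (x (i + 1))‖ ^ 2 / ‖gradient f (x i)‖ ^ 2)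
    (hd : ∀ i, d (i + 1) = gradient f (x (i + 1)) + β i • d i)
    (k : ℕ) (hgrad : ∀ i ≤ k, gradient f (x i) ≠ 0)
    (εk : ℝ)
    (hεk : εk = Real.sqrt ((1 - q) ^ 2 * (k : ℝ) ^ 2
        / (4 * q + (1 - q) ^ 2 * (k : ℝ) ^ 2))) :
    f (x (k + 1)) - f xstar ≤
      ((1 - q * ((1 - εk) / (1 + εk))) / (1 + q * ((1 - εk) / (1 + εk)))) ^ 2
        * (f (x k) - f xstar) := by
  have hL : 0 < L := hμ.trans hμL
  have hq0 : 0 < q := by rw [hq]; positivity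
  have hq1 : q < 1 := by rw [hq, div_lt_one hL]; exact hμL
  have hqL : μ = q * L := by rw [hq]; field_simp
  have horth : ∀ i, ⟪gradient f (x (i + 1)), d i⟫_ℝ = 0 := by
    intro i
    have h1 := fr_line_deriv f hdiff (x i) (-d i) (γ i)
    have h2 : IsLocalMin (fun s : ℝ => f (x i + s • -d i)) (γ i) := by
      refine Filter.Eventually.of_forall fun t => ?_
      simpa [sub_eq_add_neg] using hls i t
    have h3 := h2.hasDerivAt_eq_zero h1
    rw [inner_neg_right, neg_eq_zero] at h3
    rw [hx i, sub_eq_add_neg, ← smul_neg]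
    exact h3
  have hgd : ∀ i, ⟪gradient f (x i), d i⟫_ℝ = ‖gradient f (x i)‖ ^ 2 := by
    intro i
    cases i with
    | zero => rw [hd0, real_inner_self_eq_norm_sq]
    | succ i => rw [hd, inner_add_right, real_inner_smul_right, horth, real_inner_self_eq_norm_sq,
        mul_zero, add_zero]
  have hstar : gradient f xstar = 0 := by
    have h1 : IsLocalMin f xstar := Filter.Eventually.of_forall hmin
    have h2 := h1.fderiv_eq_zero
    simp [gradient, h2]
  have hint := fr_interp f hdiff μ L hμL hsmooth hsc
  have hxd : ∀ i, x i - x (i + 1) = γ i • d i := by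
    intro i; rw [hx i]; abel
  obtain ⟨τ, hτ⟩ : ∃ τ, τ = (1 - q) / (2 * Real.sqrt q) := ⟨_, rfl⟩
  have hτ0 : 0 ≤ τ := by
    rw [hτ]; apply div_nonneg (by linarith); positivity
  have hτq : τ ^ 2 = (1 - q) ^ 2 / (4 * q) := by
    rw [hτ, div_pow, mul_pow, Real.sq_sqrt hq0.le]; norm_num
  have hτ2 : τ ^ 2 = (L - μ) ^ 2 / (4 * μ * L) := by
    rw [hτq, hqL]; field_simp
  have hratio : ∀ i ≤ k, ‖d i‖ ^ 2 ≤ (1 + ((i : ℝ) * τ) ^ 2) * ‖gradient f (x i)‖ ^ 2 := by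
    intro i
    induction i with
    | zero => intro _; rw [hd0]; simp
    | succ i ih =>
      intro hi
      have ih := ih (by omega)
      have hg := hgrad i (by omega)
      have hGp : 0 < ‖gradient f (x i)‖ ^ 2 := by
        have := norm_pos_iff.2 hg
        positivity
      have hi1 := hint (x i) (x (i + 1))
      have hi2 := hint (x (i + 1)) (x i)
      rw [← neg_sub (x i), ← neg_sub (gradient f (x i)), norm_neg, norm_neg, inner_neg_neg,
        inner_neg_right] at hi2
      rw [hxd, norm_smul, mul_pow, Real.norm_eq_abs, sq_abs, inner_sub_left, real_inner_smul_right,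
        real_inner_smul_right, horth, hgd] at hi1 hi2
      have hco : ‖gradient f (x i) - gradient f (x (i + 1))‖ ^ 2 + μ * L * (γ i ^ 2 * ‖d i‖ ^ 2)
          ≤ (L + μ) * (γ i * ‖gradient f (x i)‖ ^ 2) := by
        linarith
      have hstep := fr_ratio_step μ L hμ hμL (gradient f (x i)) (gradient f (x (i + 1))) (d i)
        (γ i) τ (i * τ) hτ0 hτ2 (by positivity) hg (hgd i) (horth i) hco ih
      have hdn : ‖d (i + 1)‖ ^ 2 = ‖gradient f (x (i + 1))‖ ^ 2 + β i ^ 2 * ‖d i‖ ^ 2 := by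
        rw [hd, norm_add_sq_real, real_inner_smul_right, horth, norm_smul, mul_pow,
          Real.norm_eq_abs, sq_abs]
        ring
      rw [hdn, hβ]
      set G := ‖gradient f (x i)‖ ^ 2
      set G' := ‖gradient f (x (i + 1))‖ ^ 2
      have hG' : 0 ≤ G' := sq_nonneg _
      have h1 : (G' / G) ^ 2 * ‖d i‖ ^ 2 ≤ (((i : ℝ) + 1) * τ) ^ 2 * G' := by
        rw [div_pow, div_mul_eq_mul_div, div_le_iff₀ (by positivity)]
        have := mul_le_mul_of_nonneg_left hstep hG'
        linarith
      push_cast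
      linarith
  have hε2 : εk ^ 2 = ((k : ℝ) * τ) ^ 2 / (1 + ((k : ℝ) * τ) ^ 2) := by
    rw [hεk, Real.sq_sqrt (by positivity), mul_pow, hτq]
    field_simp
  have hε0 : 0 ≤ εk := by rw [hεk]; positivity
  have hε1 : εk < 1 := by
    have : εk ^ 2 < 1 := by rw [hε2, div_lt_one (by positivity)]; linarith
    nlinarith
  have hin : ⟪gradient f (x k), gradient f (x (k + 1))⟫_ℝ
      ≤ εk * (‖gradient f (x k)‖ * ‖gradient f (x (k + 1))‖) := by
    have hr := hratio k le_rfl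
    have hgp := norm_pos_iff.2 (hgrad k le_rfl)
    have hgdk := hgd k
    have ho := horth k
    generalize gradient f (x k) = g at *
    generalize gradient f (x (k + 1)) = g' at *
    generalize d k = e at *
    have hep : 0 < ‖e‖ := by
      rw [norm_pos_iff]; rintro rfl
      rw [inner_zero_right] at hgdk
      exact (pow_pos hgp 2).ne hgdk
    have n1 : ‖g - (‖g‖ ^ 2 / ‖e‖ ^ 2) • e‖ ^ 2 ≤ (εk * ‖g‖) ^ 2 := by
      rw [norm_sub_sq_real, norm_smul, real_inner_smul_right, hgdk, mul_pow, mul_pow,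
        Real.norm_eq_abs, sq_abs, hε2]
      have hC : 0 < 1 + ((k : ℝ) * τ) ^ 2 := by positivity
      generalize hCC : 1 + ((k : ℝ) * τ) ^ 2 = C at *
      have hC' : ((k : ℝ) * τ) ^ 2 = C - 1 := by linarith
      rw [hC']
      have hG : 0 < ‖g‖ ^ 2 := by positivity
      have hE : 0 < ‖e‖ ^ 2 := by positivity
      generalize ‖g‖ ^ 2 = G at *
      generalize ‖e‖ ^ 2 = D at *
      have e1 : G - 2 * (G / D * G) + (G / D) ^ 2 * D = G - G ^ 2 / D := by
        field_simp; ring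
      have e2 : (C - 1) / C * G = G - G / C := by field_simp
      rw [e1, e2]
      have : G / C ≤ G ^ 2 / D := by
        rw [div_le_div_iff₀ hC hE]
        nlinarith
      linarith
    have n2 := abs_le_of_sq_le_sq' n1 (by positivity) |>.2
    have n3 := real_inner_le_norm (g - (‖g‖ ^ 2 / ‖e‖ ^ 2) • e) g'
    rw [inner_sub_left, real_inner_smul_left, real_inner_comm g' e, ho, mul_zero, sub_zero] at n3
    have n4 := mul_le_mul_of_nonneg_right n2 (norm_nonneg g')
    linarith
  have J01 := hint (x k) (x (k + 1))
  have J0 := hint xstar (x k)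
  have J1 := hint xstar (x (k + 1))
  have ho : ⟪gradient f (x (k + 1)), x k - x (k + 1)⟫_ℝ = 0 := by
    rw [hxd, real_inner_smul_right, horth, mul_zero]
  rw [hstar, zero_sub, norm_neg, ← neg_sub _ xstar, norm_neg, inner_neg_neg, inner_neg_right]
    at J0 J1
  have hsub : x k - xstar - (x (k + 1) - xstar) = x k - x (k + 1) := by abel
  have hc : 0 < L⁻¹ := inv_pos.2 hL
  have hcL : L⁻¹ * L = 1 := inv_mul_cancel₀ hL.ne'
  have main := fr_one_step q εk hq0 hq1 hε0 hε1 (x k - xstar) (x (k + 1) - xstar)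
    (L⁻¹ • gradient f (x k)) (L⁻¹ • gradient f (x (k + 1)))
    (L⁻¹ * (f (x k) - f xstar)) (L⁻¹ * (f (x (k + 1)) - f xstar))
    (by
      rw [hsub, ← smul_sub, norm_smul, real_inner_smul_left, real_inner_smul_left, mul_pow,
        Real.norm_eq_abs, sq_abs]
      rw [hqL] at J01
      have h := mul_le_mul_of_nonneg_left J01 (sq_nonneg L⁻¹)
      field_simp at h ⊢
      linarith)
    (by
      rw [norm_smul, real_inner_smul_left, mul_pow, Real.norm_eq_abs, sq_abs]
      rw [hqL] at J0
      have h := mul_le_mul_of_nonneg_left J0 (sq_nonneg L⁻¹)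
      field_simp at h ⊢
      linarith)
    (by
      rw [norm_smul, real_inner_smul_left, mul_pow, Real.norm_eq_abs, sq_abs]
      rw [hqL] at J1
      have h := mul_le_mul_of_nonneg_left J1 (sq_nonneg L⁻¹)
      field_simp at h ⊢
      linarith)
    (by rw [hsub, real_inner_smul_left, ho, mul_zero])
    (by
      rw [norm_smul, norm_smul, real_inner_smul_left, real_inner_smul_right,
        Real.norm_of_nonneg hc.le]
      have h := mul_le_mul_of_nonneg_left hin (mul_pos hc hc).le
      linarith)
  refine le_of_mul_le_mul_left ?_ hc
  linarith
end
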